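/- Let ν > 0, let f : ℝ → ℝ be C², 2π-periodic, and let g : ℝ → ℝ be bounded. Suppose f(x)³ − f(x) − ν f''(x) = g(x) for every x ∈ ℝ, and set M = sup_{x ∈ ℝ} |f(x)| and G = sup_{x ∈ ℝ} |g(x)|. Then M³ − M ≤ G. -/

import Mathlib

open Real Set

noncomputable section

section SecondDerivative

variable {f : ℝ → ℝ} {x₀ : ℝ}

theorem deriv_deriv_nonpos_of_isLocalMax (hmax : IsLocalMax f x₀) (hf : ContinuousAt f x₀) :
    deriv (deriv f) x₀ ≤ 0 := by
  by_contra! hpos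
  have hmin : IsLocalMin f x₀ := isLocalMin_of_deriv_deriv_pos hpos hmax.deriv_eq_zero hf
  have hconst : f =ᶠ[nhds x₀] fun _ => f x₀ := by
    filter_upwards [hmax, hmin] with x hle hge using le_antisymm hle hge
  have hzero : deriv (deriv f) x₀ = 0 := by simpa using hconst.deriv.deriv_eq
  exact hpos.ne' hzero

theorem deriv_deriv_nonneg_of_isLocalMin (hmin : IsLocalMin f x₀) (hf : ContinuousAt f x₀) :
    0 ≤ deriv (deriv f) x₀ := by
  have hneg : deriv (deriv (-f)) x₀ ≤ 0 := deriv_deriv_nonpos_of_isLocalMax hmin.neg hf.neg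
  have hderiv : deriv (deriv (-f)) x₀ = -deriv (deriv f) x₀ := by
    rw [deriv.neg', deriv.fun_neg]
  linarith

end SecondDerivative

theorem nonneg_isLocalMax_or_nonpos_isLocalMin_of_isLocalMax_abs {X : Type*}
    [TopologicalSpace X] {f : X → ℝ} {x₀ : X} (hmax : IsLocalMax (fun x => |f x|) x₀) :
    0 ≤ f x₀ ∧ IsLocalMax f x₀ ∨ f x₀ ≤ 0 ∧ IsLocalMin f x₀ := by
  rcases le_total 0 (f x₀) with hnonneg | hnonpos
  · refine .inl ⟨hnonneg, ?_⟩
    filter_upwards [hmax] with x hx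
    exact (le_abs_self _).trans (hx.trans_eq (abs_of_nonneg hnonneg))
  · refine .inr ⟨hnonpos, ?_⟩
    filter_upwards [hmax] with x hx
    exact neg_le_neg_iff.1 ((neg_le_abs _).trans (hx.trans_eq (abs_of_nonpos hnonpos)))

section OddNonlinearity

variable {φ f : ℝ → ℝ} {ν : ℝ}

theorem map_abs_le_abs_map_sub_mul_deriv_deriv_of_isLocalMax_abs {x₀ : ℝ} (hφ : Function.Odd φ)
    (hν : 0 ≤ ν) (hf : ContinuousAt f x₀) (hmax : IsLocalMax (fun x => |f x|) x₀) :
    φ |f x₀| ≤ |φ (f x₀) - ν * deriv (deriv f) x₀| := by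
  rcases nonneg_isLocalMax_or_nonpos_isLocalMin_of_isLocalMax_abs hmax with
    ⟨hnonneg, hmax_f⟩ | ⟨hnonpos, hmin_f⟩
  · have hdiff : ν * deriv (deriv f) x₀ ≤ 0 :=
      mul_nonpos_of_nonneg_of_nonpos hν (deriv_deriv_nonpos_of_isLocalMax hmax_f hf)
    calc φ |f x₀| = φ (f x₀) := by rw [abs_of_nonneg hnonneg]
      _ ≤ φ (f x₀) - ν * deriv (deriv f) x₀ := by linarith
      _ ≤ |φ (f x₀) - ν * deriv (deriv f) x₀| := le_abs_self _
  · have hdiff : 0 ≤ ν * deriv (deriv f) x₀ :=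
      mul_nonneg hν (deriv_deriv_nonneg_of_isLocalMin hmin_f hf)
    calc φ |f x₀| = -φ (f x₀) := by rw [abs_of_nonpos hnonpos, hφ]
      _ ≤ -(φ (f x₀) - ν * deriv (deriv f) x₀) := by linarith
      _ ≤ |φ (f x₀) - ν * deriv (deriv f) x₀| := neg_le_abs _

theorem stmt18_general {g : ℝ → ℝ} {c : ℝ} (hφ : Function.Odd φ) (hν : 0 ≤ ν)
    (hf : ContDiff ℝ 2 f) (hc : c ≠ 0) (hfper : Function.Periodic f c)
    (hg : ∃ B : ℝ, ∀ x : ℝ, |g x| ≤ B)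
    (heq : ∀ x : ℝ, φ (f x) - ν * deriv (deriv f) x = g x) :
    φ (⨆ x : ℝ, |f x|) ≤ ⨆ x : ℝ, |g x| := by
  obtain ⟨B, hB⟩ := hg
  have hcompact : IsCompact (range fun x => |f x|) :=
    (hfper.comp abs).compact_of_continuous hc hf.continuous.abs
  obtain ⟨x₀, hx₀ : |f x₀| = ⨆ x, |f x|⟩ := hcompact.sSup_mem (range_nonempty _)
  have hmax : IsLocalMax (fun x => |f x|) x₀ :=
    .of_forall fun x => (le_ciSup hcompact.bddAbove x).trans_eq hx₀.symm
  calc φ (⨆ x, |f x|) = φ |f x₀| := by rw [hx₀]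
    _ ≤ |φ (f x₀) - ν * deriv (deriv f) x₀| :=
      map_abs_le_abs_map_sub_mul_deriv_deriv_of_isLocalMax_abs hφ hν
        hf.continuous.continuousAt hmax
    _ = |g x₀| := by rw [heq]
    _ ≤ ⨆ x, |g x| := le_ciSup (f := fun x => |g x|) ⟨B, forall_mem_range.2 hB⟩ x₀

end OddNonlinearity

/-- elliptic maximum-principle bound used in the proof of
Proposition 5.3: if `f` is `C²` and `2π`-periodic, `g` is bounded, and
`f³ − f − νf'' = g` on `ℝ`, then `M³ − M ≤ G` where `M = sup|f|` and `G = sup|g|`. -/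
theorem stmt18 (ν : ℝ) (hν : 0 < ν) (f g : ℝ → ℝ)
    (hf : ContDiff ℝ 2 f) (hfper : Function.Periodic f (2 * Real.pi))
    (hg : ∃ B : ℝ, ∀ x : ℝ, |g x| ≤ B)
    (heq : ∀ x : ℝ, f x ^ 3 - f x - ν * deriv (deriv f) x = g x) :
    (⨆ x : ℝ, |f x|) ^ 3 - (⨆ x : ℝ, |f x|) ≤ ⨆ x : ℝ, |g x| := by
  have hodd : Function.Odd fun y : ℝ => y ^ 3 - y := fun y => by ring
  exact stmt18_general (φ := fun y => y ^ 3 - y) hodd hν.le hf two_pi_pos.ne' hfper hg heq
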